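/- Let T > 0 and let α_n, β_n (n ≥ 1) and α₀, β₀ be càdlàg functions on [0,T] such that α_n → α₀ uniformly on [0,T] and β_n → β₀ in the Skorokhod M1 topology. Assume in addition that for every t ∈ [0,T] at which α₀ is discontinuous (Δα₀(t) ≠ 0) there is δ > 0 such that β_n → β₀ uniformly on [0,T] ∩ [t−δ, t+δ]. Then α_n + β_n → α₀ + β₀ in the Skorokhod M1 topology. -/

import Mathlib

open Filter Set MeasureTheory Topology

noncomputable section

/-- A function `x : ℝ → ℝ` is càdlàg on `[0,T]`. -/
def Cadlag (T : ℝ) (x : ℝ → ℝ) : Prop :=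
  (∀ t ∈ Set.Ico (0:ℝ) T, Filter.Tendsto x (nhdsWithin t (Set.Ici t)) (nhds (x t))) ∧
  (∀ t ∈ Set.Ioc (0:ℝ) T, ∃ L : ℝ, Filter.Tendsto x (nhdsWithin t (Set.Iio t)) (nhds L))

/-- The left limit `x(t−)`, with the convention `x(0−) := x(0)`. -/
def leftVal (x : ℝ → ℝ) (t : ℝ) : ℝ := if t ≤ 0 then x 0 else Function.leftLim x t

/-- The jump `Δx(t) = x(t) − x(t−)` of a càdlàg path. -/
def jumpAt (x : ℝ → ℝ) (t : ℝ) : ℝ := x t - leftVal x t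

/-- The completed graph `Γ(x)` of a càdlàg path on `[0,T]`. -/
def compGraph (T : ℝ) (x : ℝ → ℝ) : Set (ℝ × ℝ) :=
  {pt | pt.2 ∈ Set.Icc (0:ℝ) T ∧ ∃ c ∈ Set.Icc (0:ℝ) 1,
    pt.1 = c * leftVal x pt.2 + (1 - c) * x pt.2}

/-- The order on the completed graph. -/
def graphLE (x : ℝ → ℝ) (p₁ p₂ : ℝ × ℝ) : Prop :=
  p₁.2 < p₂.2 ∨ (p₁.2 = p₂.2 ∧ |p₁.1 - leftVal x p₁.2| ≤ |p₂.1 - leftVal x p₁.2|)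

/-- `(u,r)` is a parametric representation of `x`. -/
def ParamRep (T : ℝ) (x : ℝ → ℝ) (u r : ℝ → ℝ) : Prop :=
  ContinuousOn u (Set.Icc 0 1) ∧ ContinuousOn r (Set.Icc 0 1) ∧
  (∀ s ∈ Set.Icc (0:ℝ) 1, (u s, r s) ∈ compGraph T x) ∧
  (∀ pt ∈ compGraph T x, ∃ s ∈ Set.Icc (0:ℝ) 1, (u s, r s) = pt) ∧
  (∀ s₁ ∈ Set.Icc (0:ℝ) 1, ∀ s₂ ∈ Set.Icc (0:ℝ) 1, s₁ ≤ s₂ →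
    graphLE x (u s₁, r s₁) (u s₂, r s₂))

/-- The Skorokhod M1 distance on `D([0,T];ℝ)`. -/
def dM1 (T : ℝ) (x y : ℝ → ℝ) : ℝ :=
  sInf {d : ℝ | ∃ u r v ρ : ℝ → ℝ, ParamRep T x u r ∧ ParamRep T y v ρ ∧
    d = max (sSup ((fun s => |u s - v s|) '' Set.Icc (0:ℝ) 1))
            (sSup ((fun s => |r s - ρ s|) '' Set.Icc (0:ℝ) 1))}

/-! Parametrise every completed graph over `[0, T]` by the same lexicographically ordered set of
pairs `(t, c)`, where `c` runs along the jump at `t`. Then `x i → x₀` in M1 as soon as the values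
converge at a dense set of times containing `0` and `T` and, for every `e > 0`, every time has a
neighbourhood over which the graphs are eventually monotone up to an error `e`: on each cell of a
fine subdivision both graphs can then be traversed almost affinely between nearly equal endpoints.
Conversely, M1 convergence yields an order-preserving approximate matching of the graphs, hence the
second condition, and convergence of the values at `T` and at all continuity times of `x₀`.

For a sum, the values converge off the countably many jump times of the limits. Near a time where
the limit of one summand is continuous, that summand is eventually almost constant, so the sum is as
nearly monotone as the other summand. Near a common jump, local uniform convergence transports the
near monotonicity of the limiting sum.
-/

section NearlyMonotone

variable {ι κ : Type*} [Preorder ι] [Preorder κ] {ε h : ℝ} {f g : ι → ℝ} {s : Set ι}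

/-- A real function is `ε`-nearly monotone on `s` if its value at a point between two others leaves
the interval spanned by the two outer values by at most `ε`. For paths along a completed graph this
says that the M1 oscillation is at most `ε`. -/
def NearlyMonotoneOn (ε : ℝ) (f : ι → ℝ) (s : Set ι) : Prop :=
  ∀ ⦃i⦄, i ∈ s → ∀ ⦃j⦄, j ∈ s → ∀ ⦃k⦄, k ∈ s → i ≤ j → j ≤ k →
    f j ∈ Icc (min (f i) (f k) - ε) (max (f i) (f k) + ε)

lemma nearlyMonotoneOn_zero_of_monotoneOn (hf : MonotoneOn f s) : NearlyMonotoneOn 0 f s := by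
  intro i hi j hj k hk hij hjk
  simp [hf hi hj hij, hf hj hk hjk]

lemma NearlyMonotoneOn.neg (hf : NearlyMonotoneOn ε f s) : NearlyMonotoneOn ε (-f) s := by
  intro i hi j hj k hk hij hjk
  have := hf hi hj hk hij hjk
  simp only [mem_Icc, Pi.neg_apply, min_neg_neg, max_neg_neg] at this ⊢
  constructor <;> linarith

lemma nearlyMonotoneOn_zero_of_antitoneOn (hf : AntitoneOn f s) : NearlyMonotoneOn 0 f s :=
  neg_neg f ▸ (nearlyMonotoneOn_zero_of_monotoneOn (f := -f) hf.neg).neg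

lemma NearlyMonotoneOn.mono_set {s' : Set ι} (hf : NearlyMonotoneOn ε f s') (hs : s ⊆ s') :
    NearlyMonotoneOn ε f s :=
  fun _ hi _ hj _ hk ↦ hf (hs hi) (hs hj) (hs hk)

lemma NearlyMonotoneOn.comp {s' : Set κ} {m : κ → ι} (hf : NearlyMonotoneOn ε f s)
    (hm : MonotoneOn m s') (hmaps : MapsTo m s' s) : NearlyMonotoneOn ε (f ∘ m) s' :=
  fun _ hi _ hj _ hk hij hjk ↦
    hf (hmaps hi) (hmaps hj) (hmaps hk) (hm hi hj hij) (hm hj hk hjk)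

lemma NearlyMonotoneOn.const_add (c : ℝ) (hf : NearlyMonotoneOn ε f s) :
    NearlyMonotoneOn ε (fun i ↦ c + f i) s := by
  intro i hi j hj k hk hij hjk
  have := hf hi hj hk hij hjk
  simp only [mem_Icc, min_add_add_left, max_add_add_left] at this ⊢
  constructor <;> linarith

lemma NearlyMonotoneOn.of_abs_sub_le (hf : NearlyMonotoneOn ε f s)
    (hfg : ∀ i ∈ s, |g i - f i| ≤ h) : NearlyMonotoneOn (ε + 2 * h) g s := by
  intro i hi j hj k hk hij hjk
  have hfj := hf hi hj hk hij hjk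
  have hmin := abs_le.mp (abs_min_sub_min_le_max (g i) (g k) (f i) (f k))
  have hmax := abs_le.mp (abs_max_sub_max_le_max (g i) (g k) (f i) (f k))
  have hends : max |g i - f i| |g k - f k| ≤ h := max_le (hfg i hi) (hfg k hk)
  have hgj := abs_le.mp (hfg j hj)
  rw [mem_Icc] at hfj ⊢
  constructor <;> linarith

end NearlyMonotone

section Path

variable {T t e : ℝ} {x y : ℝ → ℝ}

lemma leftVal_zero (x : ℝ → ℝ) : leftVal x 0 = x 0 := by simp [leftVal]

lemma Cadlag.tendsto_leftVal (hx : Cadlag T x) (ht : t ∈ Icc 0 T) :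
    Tendsto x (𝓝[Ico 0 t] t) (𝓝 (leftVal x t)) := by
  rcases ht.1.eq_or_lt with rfl | h0
  · simp
  · obtain ⟨L, hL⟩ := hx.2 t ⟨h0, ht.2⟩
    rw [leftVal, if_neg h0.not_ge, leftLim_eq_of_tendsto hL]
    exact hL.mono_left (nhdsWithin_mono _ fun s hs ↦ hs.2)

lemma Cadlag.tendsto_right (hx : Cadlag T x) (ht : t ∈ Icc 0 T) :
    Tendsto x (𝓝[Icc t T] t) (𝓝 (x t)) := by
  rcases ht.2.eq_or_lt with rfl | hT
  · simpa using tendsto_pure_nhds x t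
  · exact (hx.1 t ⟨ht.1, hT⟩).mono_left (nhdsWithin_mono _ Icc_subset_Ici_self)

lemma cadlag_const (T c : ℝ) : Cadlag T fun _ ↦ c :=
  ⟨fun _ _ ↦ tendsto_const_nhds, fun _ _ ↦ ⟨c, tendsto_const_nhds⟩⟩

lemma Cadlag.add (hx : Cadlag T x) (hy : Cadlag T y) : Cadlag T fun s ↦ x s + y s := by
  refine ⟨fun t ht ↦ (hx.1 t ht).add (hy.1 t ht), fun t ht ↦ ?_⟩
  obtain ⟨L, hL⟩ := hx.2 t ht
  obtain ⟨M, hM⟩ := hy.2 t ht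
  exact ⟨L + M, hL.add hM⟩

lemma Cadlag.leftVal_add (hx : Cadlag T x) (hy : Cadlag T y) (ht : t ∈ Icc 0 T) :
    leftVal (fun s ↦ x s + y s) t = leftVal x t + leftVal y t := by
  rcases ht.1.eq_or_lt with rfl | h0
  · simp only [leftVal_zero]
  · have := right_nhdsWithin_Ico_neBot h0
    exact tendsto_nhds_unique ((hx.add hy).tendsto_leftVal ht)
      ((hx.tendsto_leftVal ht).add (hy.tendsto_leftVal ht))

lemma Cadlag.abs_leftVal_sub_le (hx : Cadlag T x) (hy : Cadlag T y) (ht : t ∈ Icc 0 T)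
    (h : ∀ᶠ s in 𝓝[Icc 0 t] t, |x s - y s| ≤ e) : |leftVal x t - leftVal y t| ≤ e := by
  rcases ht.1.eq_or_lt with rfl | h0
  · simpa only [leftVal_zero] using h.self_of_nhdsWithin (by simp)
  · have := right_nhdsWithin_Ico_neBot h0
    exact le_of_tendsto ((hx.tendsto_leftVal ht).sub (hy.tendsto_leftVal ht)).abs
      (h.filter_mono (nhdsWithin_mono _ Ico_subset_Icc_self))

/-- Parameters `(t, c)` of the points of completed graphs over `[0, T]`: `c ∈ [0, 1]` is the
position on the segment from the left limit at `t` to the value at `t`. The order of the completed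
graph becomes the lexicographic order, the same for all paths. -/
def graphParam (T : ℝ) : Set (ℝ ×ₗ ℝ) := {p | (ofLex p).1 ∈ Icc 0 T ∧ (ofLex p).2 ∈ Icc 0 1}

/-- The part of `graphParam T` over the times in `U`. -/
def strip (T : ℝ) (U : Set ℝ) : Set (ℝ ×ₗ ℝ) := {p ∈ graphParam T | (ofLex p).1 ∈ U}

/-- The space coordinate of the point with parameter `p` on the completed graph of `x`. -/
def graphPath (x : ℝ → ℝ) (p : ℝ ×ₗ ℝ) : ℝ :=
  AffineMap.lineMap (leftVal x (ofLex p).1) (x (ofLex p).1) (ofLex p).2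

lemma strip_mono {U V : Set ℝ} (h : U ⊆ V) : strip T U ⊆ strip T V := fun _ hp ↦ ⟨hp.1, h hp.2⟩

lemma time_le_of_le {p q : ℝ ×ₗ ℝ} (h : p ≤ q) : (ofLex p).1 ≤ (ofLex q).1 :=
  Prod.Lex.monotone_fst_ofLex h

lemma graphPath_const (c : ℝ) (p : ℝ ×ₗ ℝ) : graphPath (fun _ ↦ c) p = c := by
  have : leftVal (fun _ ↦ c) (ofLex p).1 = c := by
    rw [leftVal]
    split_ifs
    exacts [rfl, leftLim_eq_of_tendsto tendsto_const_nhds]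
  simp [graphPath, this]

lemma graphPath_zero (x : ℝ → ℝ) (t : ℝ) : graphPath x (toLex (t, 0)) = leftVal x t :=
  AffineMap.lineMap_apply_zero ..

lemma graphPath_one (x : ℝ → ℝ) (t : ℝ) : graphPath x (toLex (t, 1)) = x t :=
  AffineMap.lineMap_apply_one ..

lemma Cadlag.graphPath_add (hx : Cadlag T x) (hy : Cadlag T y) {p : ℝ ×ₗ ℝ}
    (hp : p ∈ graphParam T) :
    graphPath (fun s ↦ x s + y s) p = graphPath x p + graphPath y p := by
  simp only [graphPath, hx.leftVal_add hy hp.1, AffineMap.lineMap_apply_ring]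
  ring

lemma Cadlag.abs_graphPath_sub_le (hx : Cadlag T x) (hy : Cadlag T y) {p : ℝ ×ₗ ℝ}
    (hp : p ∈ graphParam T) (h : ∀ᶠ s in 𝓝[Icc 0 (ofLex p).1] (ofLex p).1, |x s - y s| ≤ e) :
    |graphPath x p - graphPath y p| ≤ e := by
  have hval := abs_le.mp (h.self_of_nhdsWithin ⟨hp.1.1, le_rfl⟩)
  have hleft := abs_le.mp (hx.abs_leftVal_sub_le hy hp.1 h)
  have hmem := (convex_Icc (-e) e).lineMap_mem hleft hval hp.2
  rw [abs_le, ← mem_Icc]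
  convert hmem using 1
  simp only [graphPath, AffineMap.lineMap_apply_ring]
  ring

end Path

section Local

variable {T t₀ e : ℝ} {x : ℝ → ℝ}

/-- The monotone projection of the parameters onto those over the single time `t₀`. -/
def collapse (t₀ : ℝ) (p : ℝ ×ₗ ℝ) : ℝ ×ₗ ℝ :=
  toLex (t₀, if (ofLex p).1 < t₀ then 0 else if (ofLex p).1 = t₀ then (ofLex p).2 else 1)

lemma collapse_mem (ht₀ : t₀ ∈ Icc 0 T) {p : ℝ ×ₗ ℝ} (hp : p ∈ graphParam T) :
    collapse t₀ p ∈ graphParam T := by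
  refine ⟨ht₀, ?_⟩
  simp only [collapse, ofLex_toLex]
  split_ifs
  exacts [left_mem_Icc.2 zero_le_one, hp.2, right_mem_Icc.2 zero_le_one]

lemma collapse_monotoneOn : MonotoneOn (collapse t₀) (graphParam T) := by
  intro p hp q hq hpq
  have hp' := hp.2
  have hq' := hq.2
  simp only [collapse, Prod.Lex.le_iff, ofLex_toLex, mem_Icc] at *
  grind

lemma collapse_eq_of_ne {p q : ℝ ×ₗ ℝ} (h : (ofLex p).1 = (ofLex q).1) (hp : (ofLex p).1 ≠ t₀) :
    collapse t₀ p = collapse t₀ q := by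
  simp [collapse, ← h, hp]

lemma Cadlag.exists_nhds_abs_graphPath_sub_collapse_le (hx : Cadlag T x) (ht₀ : t₀ ∈ Icc 0 T)
    (he : 0 < e) :
    ∃ U ∈ 𝓝 t₀, ∀ p ∈ strip T U, |graphPath x p - graphPath x (collapse t₀ p)| ≤ e := by
  obtain ⟨U, hU, htU, hleft⟩ := mem_nhdsWithin.1
    ((hx.tendsto_leftVal ht₀).eventually (Metric.closedBall_mem_nhds _ he))
  obtain ⟨V, hV, htV, hright⟩ := mem_nhdsWithin.1
    ((hx.tendsto_right ht₀).eventually (Metric.closedBall_mem_nhds _ he))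
  refine ⟨U ∩ V, inter_mem (hU.mem_nhds htU) (hV.mem_nhds htV), fun p ⟨hp, hpU, hpV⟩ ↦ ?_⟩
  rcases lt_trichotomy (ofLex p).1 t₀ with hlt | heq | hgt
  · have : collapse t₀ p = toLex (t₀, 0) := by simp [collapse, hlt]
    rw [this, graphPath_zero, ← graphPath_const (leftVal x t₀) p]
    refine hx.abs_graphPath_sub_le (cadlag_const _ _) hp ?_
    filter_upwards [self_mem_nhdsWithin, mem_nhdsWithin_of_mem_nhds (hU.mem_nhds hpU)] with s hs hsU
    exact hleft ⟨hsU, hs.1, hs.2.trans_lt hlt⟩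
  · have : collapse t₀ p = p := by simp [collapse, ← heq]
    simpa [this] using he.le
  · have : collapse t₀ p = toLex (t₀, 1) := by simp [collapse, hgt.not_gt, hgt.ne']
    rw [this, graphPath_one, ← graphPath_const (x t₀) p]
    refine hx.abs_graphPath_sub_le (cadlag_const _ _) hp ?_
    filter_upwards [self_mem_nhdsWithin, mem_nhdsWithin_of_mem_nhds (hV.mem_nhds hpV),
      mem_nhdsWithin_of_mem_nhds (lt_mem_nhds hgt)] with s hs hsV hst
    exact hright ⟨hsV, hst.le, hs.2.trans hp.1.2⟩

lemma Cadlag.exists_nhds_abs_graphPath_sub_le (hx : Cadlag T x) (ht₀ : t₀ ∈ Icc 0 T)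
    (hcont : leftVal x t₀ = x t₀) (he : 0 < e) :
    ∃ U ∈ 𝓝 t₀, ∀ p ∈ strip T U, |graphPath x p - x t₀| ≤ e := by
  have hfibre (c : ℝ) : graphPath x (toLex (t₀, c)) = x t₀ := by simp [graphPath, hcont]
  simpa only [collapse, hfibre] using hx.exists_nhds_abs_graphPath_sub_collapse_le ht₀ he

lemma nearlyMonotoneOn_graphPath_fibre (x : ℝ → ℝ) (t₀ : ℝ) :
    NearlyMonotoneOn 0 (graphPath x) {p | (ofLex p).1 = t₀} := by
  have hweight {p q : ℝ ×ₗ ℝ} (hp : (ofLex p).1 = t₀) (hq : (ofLex q).1 = t₀) (hpq : p ≤ q) :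
      (ofLex p).2 ≤ (ofLex q).2 := by
    rcases Prod.Lex.le_iff.1 hpq with h | h
    exacts [absurd h (by simp [hp, hq]), h.2]
  rcases le_total (leftVal x t₀) (x t₀) with h | h
  · refine nearlyMonotoneOn_zero_of_monotoneOn fun p hp q hq hpq ↦ ?_
    have hw := hweight hp hq hpq
    rw [mem_ofPred_eq] at hp hq
    rw [graphPath, graphPath, hp, hq]
    exact AffineMap.lineMap_mono h hw
  · refine nearlyMonotoneOn_zero_of_antitoneOn fun p hp q hq hpq ↦ ?_
    have hw := hweight hp hq hpq
    rw [mem_ofPred_eq] at hp hq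
    rw [graphPath, graphPath, hp, hq]
    exact AffineMap.lineMap_anti h hw

lemma Cadlag.exists_nhds_nearlyMonotoneOn (hx : Cadlag T x) (ht₀ : t₀ ∈ Icc 0 T) (he : 0 < e) :
    ∃ U ∈ 𝓝 t₀, NearlyMonotoneOn e (graphPath x) (strip T U) := by
  obtain ⟨U, hU, hclose⟩ := hx.exists_nhds_abs_graphPath_sub_collapse_le ht₀ (half_pos he)
  refine ⟨U, hU, ?_⟩
  have hcollapse := (nearlyMonotoneOn_graphPath_fibre x t₀).comp
    ((collapse_monotoneOn (T := T)).mono fun p (hp : p ∈ strip T U) ↦ hp.1) fun p _ ↦ rfl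
  simpa [mul_div_cancel₀] using hcollapse.of_abs_sub_le hclose

lemma Cadlag.finite_setOf_lt_abs_sub_leftVal (hx : Cadlag T x) (he : 0 < e) :
    {t ∈ Icc 0 T | e < |x t - leftVal x t|}.Finite := by
  by_contra hinf
  obtain ⟨t₀, ht₀, hacc⟩ :=
    Set.Infinite.exists_accPt_of_subset_isCompact hinf isCompact_Icc (sep_subset _ _)
  obtain ⟨U, hU, hclose⟩ := hx.exists_nhds_abs_graphPath_sub_collapse_le ht₀ (half_pos he)
  obtain ⟨t, ⟨htU, ht, hjump⟩, hne⟩ := accPt_iff_nhds.1 hacc U hU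
  have h₀ := hclose (toLex (t, 0)) ⟨⟨ht, by simp⟩, htU⟩
  have h₁ := hclose (toLex (t, 1)) ⟨⟨ht, by simp⟩, htU⟩
  rw [collapse_eq_of_ne (p := toLex (t, 0)) (q := toLex (t, 1)) rfl hne, graphPath_zero] at h₀
  rw [graphPath_one] at h₁
  grind

lemma Cadlag.countable_leftVal_ne (hx : Cadlag T x) :
    {t ∈ Icc 0 T | leftVal x t ≠ x t}.Countable := by
  have hunion := countable_iUnion fun k : ℕ ↦
    (hx.finite_setOf_lt_abs_sub_leftVal (Nat.one_div_pos_of_nat (α := ℝ) (n := k))).countable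
  refine hunion.mono fun t ⟨ht, hne⟩ ↦ ?_
  obtain ⟨k, hk⟩ := exists_nat_one_div_lt (abs_pos.2 (sub_ne_zero.2 hne.symm))
  exact mem_iUnion.2 ⟨k, ht, hk⟩

/-- Compactness of completed graphs, simultaneously for all càdlàg paths. -/
lemma exists_tendsto_graphPath_of_ultrafilter (F : Ultrafilter (ℝ ×ₗ ℝ)) (hF : graphParam T ∈ F) :
    ∃ p₀ ∈ graphParam T, Tendsto (fun p : ℝ ×ₗ ℝ ↦ (ofLex p).1) F (𝓝 (ofLex p₀).1) ∧
      ∀ x, Cadlag T x → Tendsto (graphPath x) F (𝓝 (graphPath x p₀)) := by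
  obtain ⟨t₀, ht₀, htime⟩ := isCompact_Icc.ultrafilter_le_nhds
    (F.map fun p : ℝ ×ₗ ℝ ↦ (ofLex p).1)
    (tendsto_principal.2 (mem_of_superset hF fun p (hp : p ∈ graphParam T) ↦ hp.1))
  obtain ⟨c₀, hc₀, hweight⟩ := isCompact_Icc.ultrafilter_le_nhds
    (F.map fun p ↦ (ofLex (collapse t₀ p)).2)
    (tendsto_principal.2 (mem_of_superset hF fun p hp ↦ (collapse_mem ht₀ hp).2))
  refine ⟨toLex (t₀, c₀), ⟨ht₀, hc₀⟩, htime, fun x hx ↦ ?_⟩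
  have hfibre : Tendsto (graphPath x ∘ collapse t₀) F (𝓝 (graphPath x (toLex (t₀, c₀)))) :=
    ((AffineMap.lineMap_continuous (p := leftVal x t₀) (q := x t₀)).tendsto c₀).comp hweight
  refine hfibre.congr_dist (Metric.tendsto_nhds.2 fun e he ↦ ?_)
  obtain ⟨U, hU, hclose⟩ := hx.exists_nhds_abs_graphPath_sub_collapse_le ht₀ (half_pos he)
  filter_upwards [hF, htime hU] with p hp hpU
  rw [Real.dist_0_eq_abs, abs_of_nonneg dist_nonneg, dist_comm]
  exact (hclose p ⟨hp, hpU⟩).trans_lt (half_lt_self he)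

end Local

section Graph

variable {T : ℝ} {x : ℝ → ℝ} {p q : ℝ ×ₗ ℝ}

/-- The point with parameter `p` on the completed graph of `x`. -/
def graphPoint (x : ℝ → ℝ) (p : ℝ ×ₗ ℝ) : ℝ × ℝ := (graphPath x p, (ofLex p).1)

lemma compGraph_eq_image (T : ℝ) (x : ℝ → ℝ) : compGraph T x = graphPoint x '' graphParam T := by
  ext ⟨z, t⟩
  constructor
  · rintro ⟨ht, c, hc, hz : z = c * leftVal x t + (1 - c) * x t⟩
    refine ⟨toLex (t, 1 - c), ⟨ht, Icc.mem_iff_one_sub_mem.1 hc⟩, Prod.ext ?_ rfl⟩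
    simp [graphPoint, graphPath, AffineMap.lineMap_apply_ring, hz]
  · rintro ⟨p, hp, hpz⟩
    obtain ⟨rfl, rfl⟩ := Prod.ext_iff.1 hpz
    refine ⟨hp.1, 1 - (ofLex p).2, Icc.mem_iff_one_sub_mem.1 hp.2, ?_⟩
    simp [graphPoint, graphPath, AffineMap.lineMap_apply_ring]

lemma abs_graphPath_sub_leftVal (hp : 0 ≤ (ofLex p).2) :
    |graphPath x p - leftVal x (ofLex p).1| = (ofLex p).2 * |jumpAt x (ofLex p).1| := by
  rw [graphPath, AffineMap.lineMap_apply, vsub_eq_sub, vadd_eq_add, add_sub_cancel_right,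
    smul_eq_mul, abs_mul, abs_of_nonneg hp, jumpAt]

lemma graphPoint_eq_of_jumpAt_eq_zero (ht : (ofLex p).1 = (ofLex q).1)
    (hjump : jumpAt x (ofLex p).1 = 0) : graphPoint x p = graphPoint x q := by
  simp [graphPoint, graphPath, ← ht, ← sub_eq_zero.1 hjump]

lemma graphLE_graphPoint_iff (hp : p ∈ graphParam T) (hq : q ∈ graphParam T) :
    graphLE x (graphPoint x p) (graphPoint x q) ↔ p ≤ q ∨ graphPoint x p = graphPoint x q := by
  rcases lt_trichotomy (ofLex p).1 (ofLex q).1 with ht | ht | ht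
  · exact iff_of_true (.inl ht) (.inl (Prod.Lex.le_iff.2 (.inl ht)))
  · have hq' := abs_graphPath_sub_leftVal (x := x) hq.2.1
    rw [← ht] at hq'
    simp only [graphLE, graphPoint, Prod.Lex.le_iff, ← ht, lt_irrefl, false_or, true_and, hq',
      abs_graphPath_sub_leftVal hp.2.1]
    rcases eq_or_ne (jumpAt x (ofLex p).1) 0 with hjump | hjump
    · exact iff_of_true (by simp [hjump])
        (.inr (by simpa only [graphPoint, ← ht] using graphPoint_eq_of_jumpAt_eq_zero ht hjump))
    · rw [mul_le_mul_iff_left₀ (abs_pos.2 hjump)]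
      refine ⟨.inl, fun h ↦ h.elim id fun hpq ↦ ?_⟩
      have hdist := congrArg (fun z ↦ |z.1 - leftVal x (ofLex p).1|) hpq
      simp only [hq', abs_graphPath_sub_leftVal hp.2.1] at hdist
      exact (mul_right_cancel₀ (abs_pos.2 hjump).ne' hdist).le
  · refine iff_of_false (fun h ↦ ?_) (fun h ↦ ?_)
    · rcases h with h | h
      exacts [h.not_gt ht, h.1.not_gt ht]
    · rcases h with h | h
      exacts [(time_le_of_le h).not_gt ht, (congrArg Prod.snd h).not_gt ht]

lemma graphPoint_eq_of_graphLE (hp : p ∈ graphParam T) (hq : q ∈ graphParam T)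
    (hpq : graphLE x (graphPoint x p) (graphPoint x q))
    (hqp : graphLE x (graphPoint x q) (graphPoint x p)) : graphPoint x p = graphPoint x q := by
  rcases (graphLE_graphPoint_iff hp hq).1 hpq with h | h
  · rcases (graphLE_graphPoint_iff hq hp).1 hqp with h' | h'
    exacts [congrArg _ (h.antisymm h'), h'.symm]
  · exact h

end Graph

section Existence

variable {T : ℝ} {x K : ℝ → ℝ}

lemma exists_stieltjesFunction_leftLim_lt {J : Set ℝ} (hJ : J.Countable) :
    ∃ K : StieltjesFunction ℝ, StrictMono K ∧ ∀ t ∈ J, Function.leftLim K t < K t := by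
  have : Countable ↥(insert 0 J) := hJ.insert 0
  let ν : Measure ℝ := Measure.sum fun j : ↥(insert 0 J) ↦ Measure.dirac (j : ℝ)
  have hatom (t : ℝ) (ht : t ∈ insert 0 J) : ν {t} ≠ 0 := by
    rw [Measure.sum_apply _ (measurableSet_singleton t)]
    exact fun h ↦ by simpa using ENNReal.tsum_eq_zero.1 h ⟨t, ht⟩
  have : NeZero ν := ⟨fun h ↦ hatom 0 (mem_insert 0 J) (by simp [h])⟩
  let F := ProbabilityTheory.cdf ν.toFinite
  refine ⟨StieltjesFunction.id + F, strictMono_id.add_monotone F.mono, fun t ht ↦ ?_⟩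
  have hjump : (StieltjesFunction.id + F).measure {t} ≠ 0 := fun h ↦ by
    rw [StieltjesFunction.measure_add, Measure.add_apply, add_eq_zero,
      ProbabilityTheory.measure_cdf] at h
    exact hatom t (mem_insert_of_mem 0 ht) (absolutelyContinuous_toFinite ν h.2)
  rwa [StieltjesFunction.measure_singleton, Ne, ENNReal.ofReal_eq_zero, sub_nonpos, not_le] at hjump

lemma cadlag_stieltjesFunction (T : ℝ) (K : StieltjesFunction ℝ) : Cadlag T K :=
  ⟨fun t _ ↦ K.right_continuous t, fun t _ ↦ ⟨_, K.mono.tendsto_leftLim t⟩⟩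

lemma Cadlag.exists_graphPath_eq (hx : Cadlag T x) (hT : 0 ≤ T) {z : ℝ} (h0 : x 0 ≤ z)
    (h1 : z ≤ x T) : ∃ p ∈ graphParam T, graphPath x p = z := by
  let A := {t ∈ Icc 0 T | x t ≤ z}
  have hA : IsLUB A (sSup A) :=
    isLUB_csSup ⟨0, left_mem_Icc.2 hT, h0⟩ ⟨T, fun t ht ↦ ht.1.2⟩
  set t := sSup A
  have ht : t ∈ Icc 0 T := ⟨hA.1 ⟨left_mem_Icc.2 hT, h0⟩, hA.2 fun s hs ↦ hs.1.2⟩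
  rcases le_or_gt (x t) z with hz | hz
  · refine ⟨toLex (t, 1), ⟨ht, by simp⟩, (graphPath_one x t).trans (hz.antisymm ?_)⟩
    rcases ht.2.eq_or_lt with hTt | htT
    · rwa [hTt]
    · have := left_nhdsWithin_Ioc_neBot htT
      refine ge_of_tendsto
        ((hx.tendsto_right ht).mono_left (nhdsWithin_mono _ Ioc_subset_Icc_self)) ?_
      filter_upwards [self_mem_nhdsWithin] with s hs
      by_contra! hsz
      exact hs.1.not_ge (hA.1 ⟨⟨ht.1.trans hs.1.le, hs.2⟩, hsz.le⟩)
  · have hleft : leftVal x t ≤ z := by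
      refine le_of_tendsto_of_frequently (hx.tendsto_leftVal ht) (frequently_nhdsWithin_iff.2 ?_)
      refine (hA.frequently_nhds_mem ⟨0, left_mem_Icc.2 hT, h0⟩).mono fun s hs ↦ ⟨hs.2, hs.1.1, ?_⟩
      exact (hA.1 hs).lt_of_ne fun hst ↦ hz.not_ge (hst ▸ hs.2)
    have hsegment : ContinuousOn (fun c : ℝ ↦ graphPath x (toLex (t, c))) (Icc 0 1) :=
      (AffineMap.lineMap_continuous (p := leftVal x t) (q := x t)).continuousOn
    obtain ⟨c, hc, hcz⟩ := intermediate_value_Icc zero_le_one hsegment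
      (by simpa only [graphPath_zero, graphPath_one] using ⟨hleft, hz.le⟩)
    exact ⟨toLex (t, c), ⟨ht, hc⟩, hcz⟩

lemma le_leftVal_of_lt (hK : Monotone K) {s t : ℝ} (hst : s < t) (ht : 0 < t) :
    K s ≤ leftVal K t := by
  rw [leftVal, if_neg ht.not_ge]
  exact hK.le_leftLim hst

lemma leftVal_le (hK : Monotone K) {t : ℝ} (ht : 0 ≤ t) : leftVal K t ≤ K t := by
  rw [leftVal]
  split_ifs
  exacts [hK ht, hK.leftLim_le le_rfl]

lemma graphPath_mem_Icc (hK : Monotone K) {p : ℝ ×ₗ ℝ} (hp : p ∈ graphParam T) :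
    graphPath K p ∈ Icc (leftVal K (ofLex p).1) (K (ofLex p).1) := by
  have hle := leftVal_le hK hp.1.1
  exact (convex_Icc _ _).lineMap_mem (left_mem_Icc.2 hle) (right_mem_Icc.2 hle) hp.2

lemma graphPath_mem_Icc_endpoints (hK : Monotone K) {p : ℝ ×ₗ ℝ} (hp : p ∈ graphParam T) :
    graphPath K p ∈ Icc (K 0) (K T) := by
  refine Icc_subset_Icc ?_ (hK hp.1.2) (graphPath_mem_Icc hK hp)
  rcases hp.1.1.eq_or_lt with h | h
  · rw [← h, leftVal_zero]
  · exact le_leftVal_of_lt hK h h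

lemma graphPath_lt_of_time_lt (hK : StrictMono K) {p q : ℝ ×ₗ ℝ} (hp : p ∈ graphParam T)
    (hq : q ∈ graphParam T) (h : (ofLex p).1 < (ofLex q).1) : graphPath K p < graphPath K q := by
  obtain ⟨m, hpm, hmq⟩ := exists_between h
  calc graphPath K p ≤ K (ofLex p).1 := (graphPath_mem_Icc hK.monotone hp).2
    _ < K m := hK hpm
    _ ≤ leftVal K (ofLex q).1 := le_leftVal_of_lt hK.monotone hmq (hp.1.1.trans_lt h)
    _ ≤ graphPath K q := (graphPath_mem_Icc hK.monotone hq).1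

lemma graphLE_of_graphPath_le (hK : StrictMono K)
    (hjump : ∀ t ∈ Icc 0 T, jumpAt K t = 0 → jumpAt x t = 0) {p q : ℝ ×ₗ ℝ}
    (hp : p ∈ graphParam T) (hq : q ∈ graphParam T) (h : graphPath K p ≤ graphPath K q) :
    graphLE x (graphPoint x p) (graphPoint x q) := by
  refine (graphLE_graphPoint_iff hp hq).2 (or_iff_not_imp_left.2 fun hpq ↦ ?_)
  rcases Prod.Lex.lt_iff.1 (not_le.1 hpq) with ht | ⟨ht, hc⟩
  · exact absurd h (graphPath_lt_of_time_lt hK hq hp ht).not_ge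
  · refine graphPoint_eq_of_jumpAt_eq_zero ht.symm (hjump _ hp.1 ?_)
    by_contra hne
    have hlt : leftVal K (ofLex p).1 < K (ofLex p).1 :=
      (leftVal_le hK.monotone hp.1.1).lt_of_ne fun heq ↦ hne (by simp [jumpAt, heq])
    rw [graphPath, graphPath, ht, lineMap_le_lineMap_iff_of_lt' hlt] at h
    exact h.not_gt hc

lemma graphPoint_eq_of_graphPath_eq (hK : StrictMono K)
    (hjump : ∀ t ∈ Icc 0 T, jumpAt K t = 0 → jumpAt x t = 0) {p q : ℝ ×ₗ ℝ}
    (hp : p ∈ graphParam T) (hq : q ∈ graphParam T) (h : graphPath K p = graphPath K q) :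
    graphPoint x p = graphPoint x q :=
  graphPoint_eq_of_graphLE hp hq (graphLE_of_graphPath_le hK hjump hp hq h.le)
    (graphLE_of_graphPath_le hK hjump hq hp h.ge)

lemma Cadlag.continuousOn_graphPoint_comp (hx : Cadlag T x) (hKT : Cadlag T K) {q : ℝ → ℝ ×ₗ ℝ}
    {S : Set ℝ} (hq : MapsTo q S (graphParam T)) (hcont : ContinuousOn (graphPath K ∘ q) S)
    (hdet : ∀ p ∈ graphParam T, ∀ p' ∈ graphParam T, graphPath K p = graphPath K p' →
      graphPoint x p = graphPoint x p') : ContinuousOn (graphPoint x ∘ q) S := by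
  refine fun s hs ↦ (tendsto_iff_ultrafilter _ _ _).2 fun F hF ↦ ?_
  obtain ⟨p, hp, htime, hpath⟩ := exists_tendsto_graphPath_of_ultrafilter (F.map q)
    (Ultrafilter.mem_map.2 (mem_of_superset (hF self_mem_nhdsWithin) hq))
  have hKp : graphPath K p = graphPath K (q s) :=
    tendsto_nhds_unique (hpath K hKT) ((hcont s hs).mono_left hF)
  rw [Function.comp_apply, ← hdet p hp _ (hq hs) hKp]
  exact (hpath x hx).prodMk_nhds htime

/-- The completed graph of a strictly increasing clock `K` that jumps wherever `x` does determines
that of `x`, so traversing the former at constant speed in space parametrises the latter. -/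
lemma Cadlag.exists_paramRep_of_clock (hx : Cadlag T x) (hT : 0 ≤ T) (hKT : Cadlag T K)
    (hK : StrictMono K) (hjump : ∀ t ∈ Icc 0 T, jumpAt K t = 0 → jumpAt x t = 0) :
    ∃ u r, ParamRep T x u r := by
  let level : ℝ → ℝ := AffineMap.lineMap (K 0) (K T)
  have hmono : Monotone level := AffineMap.lineMap_mono (hK.monotone hT)
  have hcont : Continuous level := AffineMap.lineMap_continuous
  have h0 : level 0 = K 0 := AffineMap.lineMap_apply_zero ..
  have h1 : level 1 = K T := AffineMap.lineMap_apply_one ..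
  have hlevel (s : ℝ) (hs : s ∈ Icc (0 : ℝ) 1) : ∃ p ∈ graphParam T, graphPath K p = level s :=
    hKT.exists_graphPath_eq hT (h0 ▸ hmono hs.1) (h1 ▸ hmono hs.2)
  choose! q hq hqlevel using hlevel
  have hpoint : ContinuousOn (graphPoint x ∘ q) (Icc 0 1) :=
    hx.continuousOn_graphPoint_comp hKT hq (hcont.continuousOn.congr hqlevel)
      fun p hp p' hp' ↦ graphPoint_eq_of_graphPath_eq hK hjump hp hp'
  refine ⟨fun s ↦ graphPath x (q s), fun s ↦ (ofLex (q s)).1, hpoint.fst, hpoint.snd, ?_, ?_, ?_⟩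
  · exact fun s hs ↦ compGraph_eq_image T x ▸ mem_image_of_mem (graphPoint x) (hq s hs)
  · rw [compGraph_eq_image]
    rintro _ ⟨p, hp, rfl⟩
    obtain ⟨s, hs, hsp⟩ := intermediate_value_Icc zero_le_one hcont.continuousOn
      (h0 ▸ h1 ▸ graphPath_mem_Icc_endpoints hK.monotone hp)
    exact ⟨s, hs, graphPoint_eq_of_graphPath_eq hK hjump (hq s hs) hp (by rw [hqlevel s hs, hsp])⟩
  · exact fun s₁ h₁ s₂ h₂ h ↦ graphLE_of_graphPath_le hK hjump (hq s₁ h₁) (hq s₂ h₂)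
      (by simpa only [hqlevel, h₁, h₂] using hmono h)

lemma Cadlag.exists_paramRep (hx : Cadlag T x) (hT : 0 ≤ T) : ∃ u r, ParamRep T x u r := by
  obtain ⟨K, hK, hjump⟩ := exists_stieltjesFunction_leftLim_lt hx.countable_leftVal_ne
  refine hx.exists_paramRep_of_clock hT (cadlag_stieltjesFunction T K) hK fun t ht hKt ↦ ?_
  rw [jumpAt, sub_eq_zero] at hKt ⊢
  by_contra hne
  have hpos : ¬ t ≤ 0 := fun h ↦ hne (by rw [h.antisymm ht.1, leftVal_zero])
  rw [leftVal, if_neg hpos] at hKt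
  exact (hjump t ⟨ht, Ne.symm hne⟩).ne hKt.symm

end Existence

section Distance

variable {T e : ℝ} {x y u r v ρ : ℝ → ℝ}

lemma ParamRep.exists_lift (h : ParamRep T x u r) :
    ∃ q : ℝ → ℝ ×ₗ ℝ, MapsTo q (Icc 0 1) (graphParam T) ∧ MonotoneOn q (Icc 0 1) ∧
      ∀ s ∈ Icc (0 : ℝ) 1, graphPoint x (q s) = (u s, r s) := by
  obtain ⟨-, -, hmem, -, hmono⟩ := h
  simp only [compGraph_eq_image] at hmem
  choose! lift hlift hpoint using fun z (hz : z ∈ graphPoint x '' graphParam T) ↦ hz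
  refine ⟨fun s ↦ lift (u s, r s), fun s hs ↦ hlift _ (hmem s hs), fun s₁ h₁ s₂ h₂ h ↦ ?_,
    fun s hs ↦ hpoint _ (hmem s hs)⟩
  have hle := hmono s₁ h₁ s₂ h₂ h
  rw [← hpoint _ (hmem s₁ h₁), ← hpoint _ (hmem s₂ h₂),
    graphLE_graphPoint_iff (hlift _ (hmem s₁ h₁)) (hlift _ (hmem s₂ h₂)),
    hpoint _ (hmem s₁ h₁), hpoint _ (hmem s₂ h₂)] at hle
  exact hle.elim id fun heq ↦ (congrArg lift heq).le

lemma ParamRep.exists_section (h : ParamRep T x u r) :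
    ∃ S : ℝ ×ₗ ℝ → ℝ, MapsTo S (graphParam T) (Icc 0 1) ∧ MonotoneOn S (graphParam T) ∧
      ∀ p ∈ graphParam T, (u (S p), r (S p)) = graphPoint x p := by
  obtain ⟨-, -, -, hsurj, hmono⟩ := h
  rw [compGraph_eq_image] at hsurj
  choose! σ hσ hpoint using hsurj
  have hmem {p : ℝ ×ₗ ℝ} (hp : p ∈ graphParam T) := mem_image_of_mem (graphPoint x) hp
  refine ⟨fun p ↦ σ (graphPoint x p), fun p hp ↦ hσ _ (hmem hp), fun p hp q hq hpq ↦ ?_,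
    fun p hp ↦ hpoint _ (hmem hp)⟩
  by_contra! hlt
  have hle := hmono _ (hσ _ (hmem hq)) _ (hσ _ (hmem hp)) hlt.le
  rw [hpoint _ (hmem hq), hpoint _ (hmem hp)] at hle
  have hge := (graphLE_graphPoint_iff (x := x) hp hq).2 (.inl hpq)
  exact hlt.ne (congrArg σ (graphPoint_eq_of_graphLE hq hp hle hge))

lemma ParamRep.apply_zero (h : ParamRep T x u r) (hT : 0 ≤ T) : u 0 = x 0 ∧ r 0 = 0 := by
  obtain ⟨-, -, hmem, hsurj, hmono⟩ := h
  rw [compGraph_eq_image] at hmem hsurj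
  have hbot : toLex (0, 0) ∈ graphParam T := ⟨left_mem_Icc.2 hT, by simp⟩
  have h0 : (0 : ℝ) ∈ Icc 0 1 := by simp
  obtain ⟨p, hp, hpoint⟩ := hmem 0 h0
  obtain ⟨s, hs, hspoint⟩ := hsurj _ (mem_image_of_mem _ hbot)
  have hle : graphLE x (graphPoint x p) (graphPoint x (toLex (0, 0))) :=
    hpoint ▸ hspoint ▸ hmono 0 h0 s hs hs.1
  have hge := (graphLE_graphPoint_iff (x := x) hbot hp).2
    (.inl (Prod.Lex.toLex_mono (Prod.mk_le_mk.2 ⟨hp.1.1, hp.2.1⟩)))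
  have := hpoint.symm.trans (graphPoint_eq_of_graphLE hp hbot hle hge)
  simpa [graphPoint, graphPath_zero, leftVal_zero] using this

lemma ParamRep.apply_one (h : ParamRep T x u r) (hT : 0 ≤ T) : u 1 = x T ∧ r 1 = T := by
  obtain ⟨-, -, hmem, hsurj, hmono⟩ := h
  rw [compGraph_eq_image] at hmem hsurj
  have htop : toLex (T, 1) ∈ graphParam T := ⟨right_mem_Icc.2 hT, by simp⟩
  have h1 : (1 : ℝ) ∈ Icc 0 1 := by simp
  obtain ⟨p, hp, hpoint⟩ := hmem 1 h1
  obtain ⟨s, hs, hspoint⟩ := hsurj _ (mem_image_of_mem _ htop)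
  have hge : graphLE x (graphPoint x (toLex (T, 1))) (graphPoint x p) :=
    hpoint ▸ hspoint ▸ hmono s hs 1 h1 hs.2
  have hle := (graphLE_graphPoint_iff (x := x) hp htop).2
    (.inl (Prod.Lex.toLex_mono (Prod.mk_le_mk.2 ⟨hp.1.2, hp.2.2⟩)))
  have := hpoint.symm.trans (graphPoint_eq_of_graphLE hp htop hle hge)
  simpa [graphPoint, graphPath_one] using this

lemma ParamRep.comp {ψ : ℝ → ℝ} (h : ParamRep T x u r) (hcont : ContinuousOn ψ (Icc 0 1))
    (hmono : MonotoneOn ψ (Icc 0 1)) (h0 : ψ 0 = 0) (h1 : ψ 1 = 1) :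
    ParamRep T x (u ∘ ψ) (r ∘ ψ) := by
  obtain ⟨hu, hr, hmem, hsurj, hord⟩ := h
  have hmaps : MapsTo ψ (Icc 0 1) (Icc 0 1) := by
    simpa [h0, h1] using hmono.mapsTo_Icc
  refine ⟨hu.comp hcont hmaps, hr.comp hcont hmaps, fun s hs ↦ hmem _ (hmaps hs), fun z hz ↦ ?_,
    fun s₁ hs₁ s₂ hs₂ h ↦ hord _ (hmaps hs₁) _ (hmaps hs₂) (hmono hs₁ hs₂ h)⟩
  obtain ⟨s, hs, rfl⟩ := hsurj z hz
  obtain ⟨s', hs', rfl⟩ := intermediate_value_Icc zero_le_one hcont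
    (show s ∈ Icc (ψ 0) (ψ 1) by rwa [h0, h1])
  exact ⟨s', hs', rfl⟩

lemma sSup_image_abs_nonneg (f : ℝ → ℝ) (S : Set ℝ) : 0 ≤ sSup ((fun s ↦ |f s|) '' S) :=
  Real.sSup_nonneg (forall_mem_image.2 fun _ _ ↦ abs_nonneg _)

lemma dM1_nonneg (T : ℝ) (x y : ℝ → ℝ) : 0 ≤ dM1 T x y := by
  refine Real.sInf_nonneg ?_
  rintro _ ⟨u, r, v, ρ, -, -, rfl⟩
  exact le_max_of_le_left (sSup_image_abs_nonneg _ _)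

lemma dM1_le (h : ParamRep T x u r) (h' : ParamRep T y v ρ)
    (huv : ∀ s ∈ Icc (0 : ℝ) 1, |u s - v s| ≤ e) (hrρ : ∀ s ∈ Icc (0 : ℝ) 1, |r s - ρ s| ≤ e) :
    dM1 T x y ≤ e := by
  have hne : (Icc (0 : ℝ) 1).Nonempty := nonempty_Icc.2 zero_le_one
  refine csInf_le_of_le ⟨0, ?_⟩ ⟨u, r, v, ρ, h, h', rfl⟩ (max_le
    (csSup_le (hne.image _) (forall_mem_image.2 huv))
    (csSup_le (hne.image _) (forall_mem_image.2 hrρ)))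
  rintro _ ⟨u, r, v, ρ, -, -, rfl⟩
  exact le_max_of_le_left (sSup_image_abs_nonneg _ _)

lemma Cadlag.exists_paramRep_of_dM1_lt (hx : Cadlag T x) (hy : Cadlag T y) (hT : 0 ≤ T)
    (hd : dM1 T x y < e) :
    ∃ u r v ρ, ParamRep T x u r ∧ ParamRep T y v ρ ∧
      ∀ s ∈ Icc (0 : ℝ) 1, |u s - v s| < e ∧ |r s - ρ s| < e := by
  obtain ⟨u₀, r₀, h₀⟩ := hx.exists_paramRep hT
  obtain ⟨v₀, ρ₀, h₀'⟩ := hy.exists_paramRep hT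
  obtain ⟨_, ⟨u, r, v, ρ, h, h', rfl⟩, hlt⟩ :=
    exists_lt_of_csInf_lt (by exact ⟨_, u₀, r₀, v₀, ρ₀, h₀, h₀', rfl⟩) hd
  refine ⟨u, r, v, ρ, h, h', fun s hs ↦ ?_⟩
  have hle {f g : ℝ → ℝ} (hf : ContinuousOn f (Icc 0 1)) (hg : ContinuousOn g (Icc 0 1)) :
      |f s - g s| ≤ sSup ((fun s ↦ |f s - g s|) '' Icc (0 : ℝ) 1) :=
    le_csSup (isCompact_Icc.bddAbove_image (hf.sub hg).abs) (mem_image_of_mem _ hs)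
  exact ⟨(hle h.1 h'.1).trans_lt ((le_max_left _ _).trans_lt hlt),
    (hle h.2.1 h'.2.1).trans_lt ((le_max_right _ _).trans_lt hlt)⟩

lemma Cadlag.exists_monotoneOn_of_dM1_lt (hx : Cadlag T x) (hy : Cadlag T y) (hT : 0 ≤ T)
    (hd : dM1 T x y < e) :
    ∃ m : ℝ ×ₗ ℝ → ℝ ×ₗ ℝ, MapsTo m (graphParam T) (graphParam T) ∧ MonotoneOn m (graphParam T) ∧
      ∀ p ∈ graphParam T, |graphPath x p - graphPath y (m p)| < e ∧
        |(ofLex p).1 - (ofLex (m p)).1| < e := by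
  obtain ⟨u, r, v, ρ, h, h', hlt⟩ := hx.exists_paramRep_of_dM1_lt hy hT hd
  obtain ⟨S, hS, hSmono, hSpoint⟩ := h.exists_section
  obtain ⟨q, hq, hqmono, hqpoint⟩ := h'.exists_lift
  refine ⟨q ∘ S, hq.comp hS, hqmono.comp hSmono hS, fun p hp ↦ ?_⟩
  obtain ⟨hu, hr⟩ := Prod.ext_iff.1 (hSpoint p hp)
  obtain ⟨hv, hρ⟩ := Prod.ext_iff.1 (hqpoint _ (hS hp))
  have := hlt _ (hS hp)
  simp only [graphPoint] at hu hr hv hρ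
  rwa [hu, hr, ← hv, ← hρ] at this

lemma Cadlag.abs_sub_lt_of_dM1_lt (hx : Cadlag T x) (hy : Cadlag T y) (hT : 0 ≤ T)
    (hd : dM1 T x y < e) : |x T - y T| < e := by
  obtain ⟨u, r, v, ρ, h, h', hlt⟩ := hx.exists_paramRep_of_dM1_lt hy hT hd
  rw [← (h.apply_one hT).1, ← (h'.apply_one hT).1]
  exact (hlt 1 (right_mem_Icc.2 zero_le_one)).1

end Distance

section TimeChange

variable {e : ℝ} {f φ : ℝ → ℝ}

/-- A continuous monotone time change of `[0, 1]`, extended to the line by constants. -/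
structure IsTimeChange (φ : ℝ → ℝ) : Prop where
  continuous : Continuous φ
  monotone : Monotone φ
  eq_zero : ∀ z ≤ 0, φ z = 0
  eq_one : ∀ z, 1 ≤ z → φ z = 1

lemma IsTimeChange.mem_Icc (hφ : IsTimeChange φ) (z : ℝ) : φ z ∈ Icc 0 1 := by
  constructor
  · exact (hφ.eq_zero _ (min_le_right z 0)).symm.trans_le (hφ.monotone (min_le_left z 0))
  · exact (hφ.monotone (le_max_left z 1)).trans_eq (hφ.eq_one _ (le_max_right z 1))

lemma exists_isTimeChange_of_monotoneOn (hmono : MonotoneOn φ (Icc 0 1))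
    (hmaps : MapsTo φ (Icc 0 1) (Icc 0 1)) (hsurj : SurjOn φ (Icc 0 1) (Icc 0 1)) :
    ∃ φ', IsTimeChange φ' ∧ EqOn φ' φ (Icc 0 1) := by
  have h0 : (0 : ℝ) ∈ Icc 0 1 := left_mem_Icc.2 zero_le_one
  have h1 : (1 : ℝ) ∈ Icc 0 1 := right_mem_Icc.2 zero_le_one
  have hφ0 : φ 0 = 0 := by
    obtain ⟨s, hs, hs0⟩ := hsurj h0
    exact ((hmono h0 hs hs.1).trans_eq hs0).antisymm (hmaps h0).1
  have hφ1 : φ 1 = 1 := by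
    obtain ⟨s, hs, hs1⟩ := hsurj h1
    exact (hmaps h1).2.antisymm (hs1.symm.trans_le (hmono hs h1 hs.2))
  have hmono' : Monotone (hmaps.restrict φ _ _) := fun a b hab ↦ hmono a.2 b.2 hab
  have hcont : Continuous (hmaps.restrict φ _ _) :=
    hmono'.continuous_of_surjective (hmaps.restrict_surjective_iff.2 hsurj)
  refine ⟨fun z ↦ φ (projIcc 0 1 zero_le_one z), ⟨?_, ?_, fun z hz ↦ ?_, fun z hz ↦ ?_⟩,
    fun z hz ↦ ?_⟩
  · exact continuous_subtype_val.comp (hcont.comp continuous_projIcc)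
  · exact fun a b hab ↦ hmono' (monotone_projIcc zero_le_one hab)
  · simp only [projIcc_of_le_left _ hz, hφ0]
  · simp only [projIcc_of_right_le _ hz, hφ1]
  · simp only [projIcc_of_mem _ hz]

lemma continuousOn_sSup_image_Icc (hf : Continuous f) :
    ContinuousOn (fun s ↦ sSup (f '' Icc 0 s)) (Ici 0) := by
  have hscaled : Continuous fun s : ℝ ↦ sSup ((fun c ↦ f (c * s)) '' Icc 0 1) :=
    isCompact_Icc.continuous_sSup (by fun_prop)
  refine hscaled.continuousOn.congr fun s hs ↦ ?_
  have hIcc : (· * s) '' Icc 0 1 = Icc 0 s := by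
    simpa using image_mul_right_Icc zero_le_one (mem_Ici.1 hs)
  simp only [← hIcc, image_image]

lemma exists_isTimeChange_of_strictMonoOn (hcont : ContinuousOn f (Icc 0 1))
    (hmono : StrictMonoOn f (Icc 0 1)) :
    ∃ φ, IsTimeChange φ ∧ ∀ z ∈ Icc (0 : ℝ) 1, f (φ z) = AffineMap.lineMap (f 0) (f 1) z := by
  have h0 : (0 : ℝ) ∈ Icc 0 1 := left_mem_Icc.2 zero_le_one
  have h1 : (1 : ℝ) ∈ Icc 0 1 := right_mem_Icc.2 zero_le_one
  have hlt : f 0 < f 1 := hmono h0 h1 one_pos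
  have hex : ∀ z ∈ Icc (0 : ℝ) 1, ∃ s ∈ Icc (0 : ℝ) 1,
      f s = AffineMap.lineMap (f 0) (f 1) z := fun z hz ↦
    intermediate_value_Icc zero_le_one hcont
      ((convex_Icc (f 0) (f 1)).lineMap_mem (left_mem_Icc.2 hlt.le) (right_mem_Icc.2 hlt.le) hz)
  choose! ψ hψ hfψ using hex
  have hψmono : MonotoneOn ψ (Icc 0 1) := fun a ha b hb hab ↦ by
    rw [← hmono.le_iff_le (hψ a ha) (hψ b hb), hfψ a ha, hfψ b hb]
    exact AffineMap.lineMap_mono hlt.le hab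
  have hψsurj : SurjOn ψ (Icc 0 1) (Icc 0 1) := fun s hs ↦ by
    have hpos : 0 < f 1 - f 0 := sub_pos.2 hlt
    have hs0 := hmono.monotoneOn h0 hs hs.1
    have hs1 := hmono.monotoneOn hs h1 hs.2
    have hz : (f s - f 0) / (f 1 - f 0) ∈ Icc (0 : ℝ) 1 :=
      ⟨div_nonneg (by linarith) hpos.le, (div_le_one hpos).2 (by linarith)⟩
    refine ⟨_, hz, hmono.injOn (hψ _ hz) hs ?_⟩
    rw [hfψ _ hz, AffineMap.lineMap_apply_ring']
    field_simp
    ring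
  obtain ⟨φ, hφ, heq⟩ := exists_isTimeChange_of_monotoneOn hψmono hψ hψsurj
  exact ⟨φ, hφ, fun z hz ↦ by rw [heq hz, hfψ z hz]⟩

lemma NearlyMonotoneOn.le_add_of_le (hf : NearlyMonotoneOn e f (Icc 0 1)) (h01 : f 0 ≤ f 1)
    {i s : ℝ} (hi : i ∈ Icc 0 1) (hs : s ∈ Icc 0 1) (his : i ≤ s) : f i ≤ f s + 2 * e := by
  have h0 : (0 : ℝ) ∈ Icc 0 1 := left_mem_Icc.2 zero_le_one
  have h1 : (1 : ℝ) ∈ Icc 0 1 := right_mem_Icc.2 zero_le_one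
  have hi' := (hf h0 hi h1 hi.1 hi.2).2
  have hs' := (hf hi hs h1 his hs.2).1
  have he : 0 ≤ e := by have := hf h0 h0 h0 le_rfl le_rfl; simpa using this.2
  rw [max_eq_right h01] at hi'
  rcases min_choice (f i) (f 1) with h | h <;> rw [h] at hs' <;> linarith

/-- The running maximum `F` of `f` exceeds `f` by at most `2 * e`; adding `e * s` makes it strictly
increasing, and its inverse is the time change. -/
lemma NearlyMonotoneOn.exists_isTimeChange_of_le (hf : NearlyMonotoneOn e f (Icc 0 1))
    (hcont : Continuous f) (he : 0 < e) (h01 : f 0 ≤ f 1) :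
    ∃ φ, IsTimeChange φ ∧
      ∀ z ∈ Icc (0 : ℝ) 1, |f (φ z) - AffineMap.lineMap (f 0) (f 1) z| ≤ 3 * e := by
  set F : ℝ → ℝ := fun s ↦ sSup (f '' Icc 0 s)
  have hbdd (s : ℝ) : BddAbove (f '' Icc 0 s) := isCompact_Icc.bddAbove_image hcont.continuousOn
  have hFmono : MonotoneOn F (Icc 0 1) := fun a ha b _ hab ↦
    csSup_le_csSup (hbdd b) ((nonempty_Icc.2 ha.1).image f)
      (image_mono (Icc_subset_Icc_right hab))
  have hle : ∀ s ∈ Icc (0 : ℝ) 1, f s ≤ F s := fun s hs ↦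
    le_csSup (hbdd s) (mem_image_of_mem f (right_mem_Icc.2 hs.1))
  have hFle : ∀ s ∈ Icc (0 : ℝ) 1, F s ≤ f s + 2 * e := fun s hs ↦
    csSup_le ((nonempty_Icc.2 hs.1).image f) (forall_mem_image.2 fun i hi ↦
      hf.le_add_of_le h01 ⟨hi.1, hi.2.trans hs.2⟩ hs hi.2)
  have hF0 : F 0 = f 0 := by simp [F]
  obtain ⟨φ, hφ, hGφ⟩ := exists_isTimeChange_of_strictMonoOn (f := fun s ↦ F s + e * s)
    (((continuousOn_sSup_image_Icc hcont).mono Icc_subset_Ici_self).add (by fun_prop))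
    (hFmono.add_strictMono fun a _ b _ hab ↦ mul_lt_mul_of_pos_left hab he)
  refine ⟨φ, hφ, fun z hz ↦ ?_⟩
  have hFφ := hGφ z hz
  obtain ⟨hφ0, hφ1⟩ := hφ.mem_Icc z
  have hlow := hle _ (hφ.mem_Icc z)
  have hupp := hFle _ (hφ.mem_Icc z)
  have hlow1 := hle 1 (by simp)
  have hupp1 := hFle 1 (by simp)
  simp only [AffineMap.lineMap_apply_ring', hF0] at hFφ ⊢
  obtain ⟨hz0, hz1⟩ := hz
  rw [abs_le]
  constructor <;> nlinarith

lemma NearlyMonotoneOn.exists_isTimeChange (hf : NearlyMonotoneOn e f (Icc 0 1))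
    (hcont : ContinuousOn f (Icc 0 1)) (he : 0 < e) :
    ∃ φ, IsTimeChange φ ∧
      ∀ z ∈ Icc (0 : ℝ) 1, |f (φ z) - AffineMap.lineMap (f 0) (f 1) z| ≤ 3 * e := by
  wlog h01 : f 0 ≤ f 1 generalizing f
  · obtain ⟨φ, hφ, h⟩ := this hf.neg hcont.neg (neg_le_neg (not_le.1 h01).le)
    refine ⟨φ, hφ, fun z hz ↦ ?_⟩
    rw [← abs_neg]
    convert h z hz using 2
    simp only [AffineMap.lineMap_apply_ring', Pi.neg_apply]
    ring
  obtain ⟨f', hf', heq⟩ : ∃ f', Continuous f' ∧ EqOn f' f (Icc 0 1) :=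
    ⟨fun z ↦ f (projIcc 0 1 zero_le_one z),
      hcont.comp_continuous
        (continuous_subtype_val.comp (continuous_projIcc (h := zero_le_one)))
        fun _ ↦ Subtype.coe_prop _, fun z hz ↦ by simp only [projIcc_of_mem _ hz]⟩
  have hmono : NearlyMonotoneOn e f' (Icc 0 1) := fun i hi j hj k hk ↦ by
    simpa only [heq hi, heq hj, heq hk] using hf hi hj hk
  have h0 := heq (left_mem_Icc.2 zero_le_one)
  have h1 := heq (right_mem_Icc.2 zero_le_one)
  obtain ⟨φ, hφ, h⟩ := hmono.exists_isTimeChange_of_le hf' he (by rwa [h0, h1])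
  refine ⟨φ, hφ, fun z hz ↦ ?_⟩
  simpa only [h0, h1, heq (hφ.mem_Icc z)] using h z hz

lemma exists_concat_of_isTimeChange {φ : ℕ → ℝ → ℝ} {σ : ℕ → ℝ} (hφ : ∀ k, IsTimeChange (φ k))
    (hσ : Monotone σ) (N : ℕ) :
    ∃ Φ : ℝ → ℝ, Continuous Φ ∧ Monotone Φ ∧ ∀ k < N, ∀ z ∈ Icc (0 : ℝ) 1,
      Φ (k + z) = AffineMap.lineMap (σ k) (σ (k + 1)) (φ k z) := by
  refine ⟨fun y ↦ σ 0 + ∑ j ∈ Finset.range N, (σ (j + 1) - σ j) * φ j (y - j),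
    ?_, fun a b hab ↦ ?_, fun k hk z hz ↦ ?_⟩
  · have := fun j ↦ (hφ j).continuous
    fun_prop
  · dsimp only
    gcongr with j _
    · exact sub_nonneg.2 (hσ j.le_succ)
    · exact (hφ j).monotone (by linarith)
  · have hafter : ∀ j ∈ Finset.range N, j ∉ Finset.range (k + 1) →
        (σ (j + 1) - σ j) * φ j (k + z - j) = 0 := fun j _ hj ↦ by
      have : (k + 1 : ℝ) ≤ j := by exact_mod_cast not_lt.1 (Finset.mem_range.not.1 hj)
      rw [(hφ j).eq_zero _ (by linarith [hz.2]), mul_zero]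
    have hbefore : ∀ j ∈ Finset.range k, (σ (j + 1) - σ j) * φ j (k + z - j) = σ (j + 1) - σ j :=
      fun j hj ↦ by
        have : (j + 1 : ℝ) ≤ k := by exact_mod_cast Finset.mem_range.1 hj
        rw [(hφ j).eq_one _ (by linarith [hz.1]), mul_one]
    dsimp only
    rw [← Finset.sum_subset (Finset.range_subset_range.2 hk) hafter, Finset.sum_range_succ,
      Finset.sum_congr rfl hbefore, Finset.sum_range_sub, add_sub_cancel_left,
      AffineMap.lineMap_apply_ring']
    ring

end TimeChange

section Polygon

variable {T e : ℝ} {N : ℕ} {t : ℕ → ℝ} {x y u r : ℝ → ℝ}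

lemma ParamRep.monotoneOn_time (h : ParamRep T x u r) : MonotoneOn r (Icc 0 1) :=
  fun s₁ h₁ s₂ h₂ hle ↦ (h.2.2.2.2 s₁ h₁ s₂ h₂ hle).elim le_of_lt fun heq ↦ heq.1.le

lemma ParamRep.nearlyMonotoneOn {s U : Set ℝ} (h : ParamRep T x u r)
    (hx : NearlyMonotoneOn e (graphPath x) (strip T U)) (hs : s ⊆ Icc 0 1) (hU : MapsTo r s U) :
    NearlyMonotoneOn e u s := by
  obtain ⟨q, hq, hqmono, hpoint⟩ := h.exists_lift
  have hcoord {i : ℝ} (hi : i ∈ s) : graphPath x (q i) = u i ∧ (ofLex (q i)).1 = r i :=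
    Prod.ext_iff.1 (hpoint i (hs hi))
  have hmem {i : ℝ} (hi : i ∈ s) : q i ∈ strip T U :=
    ⟨hq (hs hi), by simpa only [(hcoord hi).2] using hU hi⟩
  intro i hi j hj k hk hij hjk
  have := hx (hmem hi) (hmem hj) (hmem hk) (hqmono (hs hi) (hs hj) hij)
    (hqmono (hs hj) (hs hk) hjk)
  rwa [(hcoord hi).1, (hcoord hj).1, (hcoord hk).1] at this

lemma ParamRep.exists_times (h : ParamRep T x u r) (hT : 0 < T) :
    ∃ σ : ℝ → ℝ, Monotone σ ∧ σ 0 = 0 ∧ σ T = 1 ∧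
      ∀ t ∈ Icc 0 T, σ t ∈ Icc 0 1 ∧ u (σ t) = x t ∧ r (σ t) = t := by
  obtain ⟨S, hS, hSmono, hpoint⟩ := h.exists_section
  have hmem {t : ℝ} (h0 : ¬ t ≤ 0) (hT : ¬ T ≤ t) : toLex (t, 1) ∈ graphParam T :=
    ⟨⟨(not_le.1 h0).le, (not_le.1 hT).le⟩, by simp⟩
  refine ⟨fun t ↦ if t ≤ 0 then 0 else if T ≤ t then 1 else S (toLex (t, 1)),
    fun a b hab ↦ ?_, by simp, by simp [hT.not_ge], fun t ht ↦ ?_⟩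
  · dsimp only
    split_ifs with ha0 hb0 hbT haT hb0 hbT hb0 hbT
    all_goals first
      | exact (hS (hmem ‹_› ‹_›)).1
      | exact (hS (hmem ‹_› ‹_›)).2
      | exact hSmono (hmem ‹_› ‹_›) (hmem ‹_› ‹_›)
          (Prod.Lex.toLex_mono (Prod.mk_le_mk.2 ⟨hab, le_rfl⟩))
      | linarith
  · dsimp only
    split_ifs with h0 hT'
    · rw [h0.antisymm ht.1]
      exact ⟨by simp, h.apply_zero hT.le⟩
    · rw [hT'.antisymm' ht.2]
      exact ⟨by simp, h.apply_one hT.le⟩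
    · have := Prod.ext_iff.1 (hpoint _ (hmem h0 hT'))
      exact ⟨hS (hmem h0 hT'), this.1.trans (graphPath_one x t), this.2⟩

/-- A subdivision `0 = t 0 ≤ t 1 ≤ ⋯ ≤ t N = T`, continued by the constant `T`. -/
structure IsSubdivision (T : ℝ) (N : ℕ) (t : ℕ → ℝ) : Prop where
  monotone : Monotone t
  apply_zero : t 0 = 0
  apply_of_le : ∀ k, N ≤ k → t k = T

lemma IsSubdivision.mem_Icc (ht : IsSubdivision T N t) (k : ℕ) : t k ∈ Icc 0 T := by
  constructor
  · exact ht.apply_zero ▸ ht.monotone k.zero_le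
  · exact ht.apply_of_le _ (le_max_right k N) ▸ ht.monotone (le_max_left k N)

lemma IsSubdivision.pos (ht : IsSubdivision T N t) (hT : 0 < T) : 0 < N :=
  Nat.pos_of_ne_zero fun hN ↦ hT.ne (ht.apply_zero.symm.trans (ht.apply_of_le 0 hN.le))

lemma ParamRep.exists_cell_timeChange {a b : ℝ} (h : ParamRep T x u r) (he : 0 < e)
    (ha : a ∈ Icc 0 1) (hb : b ∈ Icc 0 1) (hab : a ≤ b)
    (hmono : NearlyMonotoneOn e (graphPath x) (strip T (Icc (r a) (r b)))) :
    ∃ φ, IsTimeChange φ ∧ ∀ z ∈ Icc (0 : ℝ) 1,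
      |u (AffineMap.lineMap a b (φ z)) - AffineMap.lineMap (u a) (u b) z| ≤ 3 * e ∧
      r (AffineMap.lineMap a b (φ z)) ∈ Icc (r a) (r b) := by
  have hsub : Icc a b ⊆ Icc 0 1 := Icc_subset_Icc ha.1 hb.2
  have hmaps : MapsTo (AffineMap.lineMap a b) (Icc (0 : ℝ) 1) (Icc a b) := fun z hz ↦
    (convex_Icc a b).lineMap_mem (left_mem_Icc.2 hab) (right_mem_Icc.2 hab) hz
  have hr : MapsTo r (Icc a b) (Icc (r a) (r b)) := (h.monotoneOn_time.mono hsub).mapsTo_Icc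
  have hu := (h.nearlyMonotoneOn hmono hsub hr).comp
    ((AffineMap.lineMap_mono hab).monotoneOn (Icc 0 1)) hmaps
  obtain ⟨φ, hφ, hle⟩ := hu.exists_isTimeChange
    (h.1.comp (AffineMap.lineMap_continuous.continuousOn) (hmaps.mono_right hsub)) he
  refine ⟨φ, hφ, fun z hz ↦ ⟨?_, hr (hmaps (hφ.mem_Icc z))⟩⟩
  simpa using hle z hz

lemma Cadlag.exists_paramRep_near_polygon (hx : Cadlag T x) (hT : 0 < T) (he : 0 < e)
    (ht : IsSubdivision T N t)
    (hmono : ∀ k, NearlyMonotoneOn e (graphPath x) (strip T (Icc (t k) (t (k + 1))))) :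
    ∃ u r, ParamRep T x u r ∧ ∀ k < N, ∀ z ∈ Icc (0 : ℝ) 1,
      |u ((k + z) / N) - AffineMap.lineMap (x (t k)) (x (t (k + 1))) z| ≤ 3 * e ∧
      r ((k + z) / N) ∈ Icc (t k) (t (k + 1)) := by
  obtain ⟨u, r, h⟩ := hx.exists_paramRep hT.le
  obtain ⟨σ, hσmono, hσ0, hσT, hσ⟩ := h.exists_times hT
  choose hσI huσ hrσ using fun k ↦ hσ (t k) (ht.mem_Icc k)
  choose φ hφ hcell using fun k ↦ h.exists_cell_timeChange he (hσI k) (hσI (k + 1))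
    (hσmono (ht.monotone k.le_succ)) (by simpa only [hrσ] using hmono k)
  obtain ⟨Φ, hΦcont, hΦmono, hΦ⟩ := exists_concat_of_isTimeChange hφ (hσmono.comp ht.monotone) N
  have hN := ht.pos hT
  have hN' : (0 : ℝ) < N := Nat.cast_pos.2 hN
  have hΦ0 : Φ (N * 0) = 0 := by
    have := hΦ 0 hN 0 (by simp)
    simpa [(hφ 0).eq_zero, ht.apply_zero, hσ0] using this
  have hΦ1 : Φ (N * 1) = 1 := by
    have := hΦ (N - 1) (by omega) 1 (by simp)
    simpa [(hφ _).eq_one, Nat.cast_pred hN, Nat.sub_add_cancel hN, ht.apply_of_le, hσT] using this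
  refine ⟨_, _, h.comp (ψ := fun s ↦ Φ (N * s)) (by fun_prop)
    (fun a _ b _ hab ↦ hΦmono (by gcongr)) hΦ0 hΦ1, fun k hk z hz ↦ ?_⟩
  simp only [Function.comp_apply, mul_div_cancel₀ _ hN'.ne', hΦ k hk z hz]
  simpa only [huσ, hrσ] using hcell k z hz

lemma exists_isSubdivision {D : Set ℝ} {δ : ℝ} (hD : Dense D) (h0 : 0 ∈ D) (hTD : T ∈ D)
    (hT : 0 ≤ T) (hδ : 0 < δ) :
    ∃ N t, IsSubdivision T N t ∧ ∀ k, t k ∈ D ∧ t (k + 1) - t k < δ := by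
  have hw : 0 < δ / 3 := by positivity
  have hnear (k : ℕ) : ∃ s ∈ D, s ∈ Icc (δ / 3 * k) (δ / 3 * (k + 1)) ∧ (k = 0 → s = 0) := by
    rcases k.eq_zero_or_pos with rfl | hk
    · exact ⟨0, h0, by simp [hw.le], fun _ ↦ rfl⟩
    · obtain ⟨s, hs, hsD⟩ := hD.exists_mem_open isOpen_Ioo
        (nonempty_Ioo.2 (show δ / 3 * k < δ / 3 * (k + 1) by gcongr; simp))
      exact ⟨s, hs, Ioo_subset_Icc_self hsD, fun h ↦ absurd h hk.ne'⟩
  choose d hdD hd hd0 using hnear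
  obtain ⟨N, hN⟩ := exists_nat_gt (T / (δ / 3))
  rw [div_lt_iff₀' hw] at hN
  have hstep (k : ℕ) : d k ≤ d (k + 1) ∧ d (k + 1) - d k < δ := by
    have hk := hd k
    have hk' := hd (k + 1)
    push_cast at hk'
    exact ⟨hk.2.trans hk'.1, by linarith [hk.1, hk'.2]⟩
  refine ⟨N, fun k ↦ min (d k) T,
    ⟨monotone_nat_of_le_succ fun k ↦ min_le_min_right T (hstep k).1, ?_, fun k hk ↦ ?_⟩,
    fun k ↦ ⟨?_, ?_⟩⟩
  · simp [hd0, hT]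
  · have : δ / 3 * N ≤ δ / 3 * k := by gcongr
    exact min_eq_right (by linarith [(hd k).1])
  · rcases min_choice (d k) T with h | h <;> simp only [h, hdD, hTD]
  · have := hstep k
    rcases min_cases (d k) T with h | h <;> rcases min_cases (d (k + 1)) T with h' | h' <;>
      linarith

lemma exists_eq_add_div {N : ℕ} (hN : 0 < N) {s : ℝ} (hs : s ∈ Icc (0 : ℝ) 1) :
    ∃ k < N, ∃ z ∈ Icc (0 : ℝ) 1, s = (k + z) / N := by
  have hNpos : (0 : ℝ) < N := Nat.cast_pos.2 hN
  rcases hs.2.eq_or_lt with rfl | h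
  · exact ⟨N - 1, by omega, 1, by simp, by simp [Nat.cast_pred hN, hNpos.ne']⟩
  · have h0 : 0 ≤ s * N := mul_nonneg hs.1 hNpos.le
    refine ⟨⌊s * N⌋₊, (Nat.floor_lt h0).2 (mul_lt_of_lt_one_left hNpos h), s * N - ⌊s * N⌋₊,
      ⟨sub_nonneg.2 (Nat.floor_le h0), ?_⟩, by field_simp; ring⟩
    linarith [Nat.lt_floor_add_one (s * N)]

lemma Cadlag.dM1_le_of_isSubdivision (hx : Cadlag T x) (hy : Cadlag T y) (hT : 0 < T) (he : 0 < e)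
    (ht : IsSubdivision T N t) (hmesh : ∀ k, t (k + 1) - t k ≤ e)
    (hnode : ∀ k ≤ N, |x (t k) - y (t k)| ≤ e)
    (hxmono : ∀ k, NearlyMonotoneOn e (graphPath x) (strip T (Icc (t k) (t (k + 1)))))
    (hymono : ∀ k, NearlyMonotoneOn e (graphPath y) (strip T (Icc (t k) (t (k + 1))))) :
    dM1 T x y ≤ 7 * e := by
  obtain ⟨u, r, h, hur⟩ := hx.exists_paramRep_near_polygon hT he ht hxmono
  obtain ⟨v, ρ, h', hvρ⟩ := hy.exists_paramRep_near_polygon hT he ht hymono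
  refine dM1_le h h' (fun s hs ↦ ?_) fun s hs ↦ ?_
  all_goals
    obtain ⟨k, hk, z, hz, rfl⟩ := exists_eq_add_div (ht.pos hT) hs
    obtain ⟨hu, hr⟩ := hur k hk z hz
    obtain ⟨hv, hρ⟩ := hvρ k hk z hz
  · have hpolygon := (convex_Icc (-e) e).lineMap_mem (abs_le.1 (hnode k hk.le))
      (abs_le.1 (hnode (k + 1) hk)) hz
    simp only [AffineMap.lineMap_apply_ring', mem_Icc, abs_le] at hpolygon hu hv ⊢
    constructor <;> linarith
  · have := hmesh k
    rw [abs_le]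
    constructor <;> linarith [hr.1, hr.2, hρ.1, hρ.2]

end Polygon

section Criterion

variable {ι : Type*} {l : Filter ι}

lemma eventually_forall_ball_of_isCompact {X : Type*} [PseudoMetricSpace X] {K : Set X}
    {Q : ι → Set X → Prop} (hK : IsCompact K) (hQ : ∀ i s t, s ⊆ t → Q i t → Q i s)
    (hloc : ∀ x ∈ K, ∃ U ∈ 𝓝 x, ∀ᶠ i in l, Q i U) :
    ∃ δ > 0, ∀ᶠ i in l, ∀ x ∈ K, Q i (Metric.ball x δ) := by
  choose! U hU hQU using hloc
  obtain ⟨F, hcov⟩ := hK.elim_nhds_subcover' (fun x _ ↦ interior (U x))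
    fun x hx ↦ interior_mem_nhds.2 (hU x hx)
  obtain ⟨δ, hδ, hleb⟩ := lebesgue_number_lemma_of_metric (c := fun x : F ↦ interior (U x)) hK
    (fun _ ↦ isOpen_interior) (by simpa [iUnion_subtype] using hcov)
  have hev : ∀ᶠ i in l, ∀ y ∈ F, Q i (U y) := (Finset.eventually_all F).2 fun x _ ↦ hQU x x.2
  refine ⟨δ, hδ, hev.mono fun i hi x hx ↦ ?_⟩
  obtain ⟨y, hy⟩ := hleb x hx
  exact hQ i _ _ (hy.trans interior_subset) (hi y y.2)

variable {T e : ℝ} {x : ι → ℝ → ℝ} {x₀ : ℝ → ℝ}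

lemma exists_eventually_nearlyMonotoneOn_ball (hx₀ : Cadlag T x₀) (he : 0 < e)
    (hosc : ∀ t₀ ∈ Icc 0 T, ∃ U ∈ 𝓝 t₀,
      ∀ᶠ i in l, NearlyMonotoneOn e (graphPath (x i)) (strip T U)) :
    ∃ δ > 0, ∀ᶠ i in l, ∀ t₀ ∈ Icc 0 T,
      NearlyMonotoneOn e (graphPath (x i)) (strip T (Metric.ball t₀ δ)) ∧
        NearlyMonotoneOn e (graphPath x₀) (strip T (Metric.ball t₀ δ)) := by
  refine eventually_forall_ball_of_isCompact
    (Q := fun i U ↦ NearlyMonotoneOn e (graphPath (x i)) (strip T U) ∧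
      NearlyMonotoneOn e (graphPath x₀) (strip T U)) isCompact_Icc
    (fun i s t hst h ↦ ⟨h.1.mono_set (strip_mono hst), h.2.mono_set (strip_mono hst)⟩)
    fun t₀ ht₀ ↦ ?_
  obtain ⟨U, hU, hxU⟩ := hosc t₀ ht₀
  obtain ⟨V, hV, hx₀V⟩ := hx₀.exists_nhds_nearlyMonotoneOn ht₀ he
  exact ⟨U ∩ V, inter_mem hU hV, hxU.mono fun i hi ↦
    ⟨hi.mono_set (strip_mono inter_subset_left), hx₀V.mono_set (strip_mono inter_subset_right)⟩⟩

theorem tendsto_dM1_of_tendsto_of_nearlyMonotoneOn {D : Set ℝ} (hT : 0 < T)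
    (hx : ∀ i, Cadlag T (x i)) (hx₀ : Cadlag T x₀) (hD : Dense D) (h0 : 0 ∈ D) (hTD : T ∈ D)
    (hpt : ∀ t ∈ Icc 0 T, t ∈ D → Tendsto (fun i ↦ x i t) l (𝓝 (x₀ t)))
    (hosc : ∀ e > 0, ∀ t₀ ∈ Icc 0 T, ∃ U ∈ 𝓝 t₀,
      ∀ᶠ i in l, NearlyMonotoneOn e (graphPath (x i)) (strip T U)) :
    Tendsto (fun i ↦ dM1 T (x i) x₀) l (𝓝 0) := by
  have hle : ∀ e > 0, ∀ᶠ i in l, dM1 T (x i) x₀ ≤ 7 * e := fun e he ↦ by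
    obtain ⟨δ, hδ, hball⟩ := exists_eventually_nearlyMonotoneOn_ball hx₀ he (hosc e he)
    obtain ⟨N, t, ht, htD⟩ := exists_isSubdivision hD h0 hTD hT.le (lt_min hδ he)
    have hnode : ∀ᶠ i in l, ∀ k ∈ Finset.Iic N, |x i (t k) - x₀ (t k)| ≤ e :=
      (Finset.eventually_all _).2 fun k _ ↦
        (hpt _ (ht.mem_Icc k) (htD k).1).eventually (Metric.closedBall_mem_nhds _ he)
    have hcell (k : ℕ) : strip T (Icc (t k) (t (k + 1))) ⊆ strip T (Metric.ball (t k) δ) :=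
      strip_mono fun s hs ↦ by
        have := (htD k).2.trans_le (min_le_left _ _)
        rw [Metric.mem_ball, Real.dist_eq, abs_lt]
        constructor <;> linarith [hs.1, hs.2]
    filter_upwards [hball, hnode] with i hi hni
    exact (hx i).dM1_le_of_isSubdivision hx₀ hT he ht
      (fun k ↦ ((htD k).2.trans_le (min_le_right _ _)).le)
      (fun k hk ↦ hni k (Finset.mem_Iic.2 hk))
      (fun k ↦ (hi _ (ht.mem_Icc k)).1.mono_set (hcell k))
      (fun k ↦ (hi _ (ht.mem_Icc k)).2.mono_set (hcell k))
  refine Metric.tendsto_nhds.2 fun e he ↦ (hle (e / 14) (by positivity)).mono fun i hi ↦ ?_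
  rw [Real.dist_eq, sub_zero, abs_of_nonneg (dM1_nonneg ..)]
  linarith

end Criterion

section Convergence

variable {ι : Type*} {l : Filter ι} {T e t₀ : ℝ} {x : ι → ℝ → ℝ} {x₀ : ℝ → ℝ} {U : Set ℝ}

lemma exists_nhds_eventually_matching_of_tendsto_dM1 (hT : 0 ≤ T) (hx : ∀ i, Cadlag T (x i))
    (hx₀ : Cadlag T x₀) (hlim : Tendsto (fun i ↦ dM1 T (x i) x₀) l (𝓝 0)) (hU : U ∈ 𝓝 t₀)
    (he : 0 < e) :
    ∃ V ∈ 𝓝 t₀, ∀ᶠ i in l, ∃ m, MapsTo m (strip T V) (strip T U) ∧ MonotoneOn m (strip T V) ∧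
      ∀ p ∈ strip T V, |graphPath (x i) p - graphPath x₀ (m p)| ≤ e := by
  obtain ⟨δ, hδ, hball⟩ := Metric.mem_nhds_iff.1 hU
  refine ⟨Metric.ball t₀ (δ / 2), Metric.ball_mem_nhds _ (half_pos hδ), ?_⟩
  filter_upwards [hlim.eventually_lt_const (lt_min he (half_pos hδ))] with i hi
  obtain ⟨m, hm, hmmono, hclose⟩ := (hx i).exists_monotoneOn_of_dM1_lt hx₀ hT hi
  refine ⟨m, fun p hp ↦ ⟨hm hp.1, hball ?_⟩, hmmono.mono fun p hp ↦ hp.1,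
    fun p hp ↦ (hclose p hp.1).1.le.trans (min_le_left _ _)⟩
  have htime := (hclose p hp.1).2.trans_le (min_le_right _ _)
  have hpt₀ := Metric.mem_ball.1 hp.2
  rw [← Real.dist_eq, dist_comm] at htime
  exact Metric.mem_ball.2 ((dist_triangle _ _ _).trans_lt (by linarith))

lemma exists_nhds_eventually_nearlyMonotoneOn_of_tendsto_dM1 (hT : 0 ≤ T)
    (hx : ∀ i, Cadlag T (x i)) (hx₀ : Cadlag T x₀) (hlim : Tendsto (fun i ↦ dM1 T (x i) x₀) l (𝓝 0))
    (ht₀ : t₀ ∈ Icc 0 T) (he : 0 < e) :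
    ∃ U ∈ 𝓝 t₀, ∀ᶠ i in l, NearlyMonotoneOn e (graphPath (x i)) (strip T U) := by
  have he3 : 0 < e / 3 := by positivity
  obtain ⟨U, hU, hmono⟩ := hx₀.exists_nhds_nearlyMonotoneOn ht₀ he3
  obtain ⟨V, hV, hmatch⟩ :=
    exists_nhds_eventually_matching_of_tendsto_dM1 hT hx hx₀ hlim hU he3
  refine ⟨V, hV, hmatch.mono fun i ⟨m, hm, hmmono, hclose⟩ ↦ ?_⟩
  convert (hmono.comp hmmono hm).of_abs_sub_le hclose using 1
  ring

lemma exists_nhds_eventually_abs_graphPath_sub_le_of_tendsto_dM1 (hT : 0 ≤ T)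
    (hx : ∀ i, Cadlag T (x i)) (hx₀ : Cadlag T x₀)
    (hlim : Tendsto (fun i ↦ dM1 T (x i) x₀) l (𝓝 0)) (ht₀ : t₀ ∈ Icc 0 T)
    (hcont : leftVal x₀ t₀ = x₀ t₀) (he : 0 < e) :
    ∃ U ∈ 𝓝 t₀, ∀ᶠ i in l, ∀ p ∈ strip T U, |graphPath (x i) p - x₀ t₀| ≤ e := by
  obtain ⟨U, hU, hconst⟩ := hx₀.exists_nhds_abs_graphPath_sub_le ht₀ hcont (half_pos he)
  obtain ⟨V, hV, hmatch⟩ :=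
    exists_nhds_eventually_matching_of_tendsto_dM1 hT hx hx₀ hlim hU (half_pos he)
  refine ⟨V, hV, hmatch.mono fun i ⟨m, hm, _, hclose⟩ p hp ↦ ?_⟩
  linarith [abs_sub_le (graphPath (x i) p) (graphPath x₀ (m p)) (x₀ t₀), hclose p hp,
    hconst _ (hm hp)]

lemma tendsto_apply_of_tendsto_dM1 (hT : 0 ≤ T) (hx : ∀ i, Cadlag T (x i)) (hx₀ : Cadlag T x₀)
    (hlim : Tendsto (fun i ↦ dM1 T (x i) x₀) l (𝓝 0)) (ht₀ : t₀ ∈ Icc 0 T)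
    (hcont : t₀ = T ∨ leftVal x₀ t₀ = x₀ t₀) : Tendsto (fun i ↦ x i t₀) l (𝓝 (x₀ t₀)) := by
  refine Metric.tendsto_nhds.2 fun e he ↦ ?_
  rcases hcont with rfl | hcont
  · exact (hlim.eventually_lt_const he).mono fun i hi ↦ (hx i).abs_sub_lt_of_dM1_lt hx₀ hT hi
  · obtain ⟨U, hU, hclose⟩ :=
      exists_nhds_eventually_abs_graphPath_sub_le_of_tendsto_dM1 hT hx hx₀ hlim ht₀ hcont
        (half_pos he)
    refine hclose.mono fun i hi ↦ ?_
    have := hi (toLex (t₀, 1)) ⟨⟨ht₀, by simp⟩, mem_of_mem_nhds hU⟩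
    rw [graphPath_one] at this
    exact this.trans_lt (half_lt_self he)

lemma exists_nhds_eventually_nearlyMonotoneOn_of_tendstoUniformlyOn (hx : ∀ i, Cadlag T (x i))
    (hx₀ : Cadlag T x₀) (hU : U ∈ 𝓝 t₀) (hunif : TendstoUniformlyOn x x₀ l (Icc 0 T ∩ U))
    (ht₀ : t₀ ∈ Icc 0 T) (he : 0 < e) :
    ∃ V ∈ 𝓝 t₀, ∀ᶠ i in l, NearlyMonotoneOn e (graphPath (x i)) (strip T V) := by
  have he3 : 0 < e / 3 := by positivity
  obtain ⟨V, hV, hmono⟩ := hx₀.exists_nhds_nearlyMonotoneOn ht₀ he3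
  refine ⟨interior U ∩ V, inter_mem (interior_mem_nhds.2 hU) hV, ?_⟩
  filter_upwards [Metric.tendstoUniformlyOn_iff.1 hunif _ he3] with i hi
  have hclose : ∀ p ∈ strip T (interior U ∩ V), |graphPath (x i) p - graphPath x₀ p| ≤ e / 3 := by
    intro p hp
    refine (hx i).abs_graphPath_sub_le hx₀ hp.1 ?_
    filter_upwards [self_mem_nhdsWithin,
      mem_nhdsWithin_of_mem_nhds (isOpen_interior.mem_nhds hp.2.1)] with s hs hsU
    rw [← Real.dist_eq, dist_comm]
    exact (hi s ⟨⟨hs.1, hs.2.trans hp.1.1.2⟩, interior_subset hsU⟩).le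
  convert (hmono.mono_set (strip_mono inter_subset_right)).of_abs_sub_le hclose using 1
  ring

theorem tendsto_dM1_of_tendstoUniformlyOn (hT : 0 < T) (hx : ∀ i, Cadlag T (x i))
    (hx₀ : Cadlag T x₀) (hunif : TendstoUniformlyOn x x₀ l (Icc 0 T)) :
    Tendsto (fun i ↦ dM1 T (x i) x₀) l (𝓝 0) :=
  tendsto_dM1_of_tendsto_of_nearlyMonotoneOn hT hx hx₀ dense_univ (mem_univ _) (mem_univ _)
    (fun _ ht _ ↦ hunif.tendsto_at ht) fun _ he _ ht₀ ↦
      exists_nhds_eventually_nearlyMonotoneOn_of_tendstoUniformlyOn hx hx₀ univ_mem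
        (by rwa [inter_univ]) ht₀ he

end Convergence

section Addition

variable {ι : Type*} {l : Filter ι} {T e t₀ : ℝ} {a b : ι → ℝ → ℝ} {a₀ b₀ : ℝ → ℝ}

lemma exists_nhds_eventually_nearlyMonotoneOn_add_of_leftVal_eq (hT : 0 ≤ T)
    (ha : ∀ i, Cadlag T (a i)) (hb : ∀ i, Cadlag T (b i)) (ha₀ : Cadlag T a₀) (hb₀ : Cadlag T b₀)
    (halim : Tendsto (fun i ↦ dM1 T (a i) a₀) l (𝓝 0))
    (hblim : Tendsto (fun i ↦ dM1 T (b i) b₀) l (𝓝 0)) (ht₀ : t₀ ∈ Icc 0 T)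
    (hcont : leftVal a₀ t₀ = a₀ t₀) (he : 0 < e) :
    ∃ U ∈ 𝓝 t₀, ∀ᶠ i in l,
      NearlyMonotoneOn e (graphPath fun s ↦ a i s + b i s) (strip T U) := by
  have he3 : 0 < e / 3 := by positivity
  obtain ⟨U, hU, haU⟩ := exists_nhds_eventually_abs_graphPath_sub_le_of_tendsto_dM1 hT ha ha₀ halim
    ht₀ hcont he3
  obtain ⟨V, hV, hbV⟩ := exists_nhds_eventually_nearlyMonotoneOn_of_tendsto_dM1 hT hb hb₀ hblim
    ht₀ he3
  refine ⟨U ∩ V, inter_mem hU hV, (haU.and hbV).mono fun i ⟨hai, hbi⟩ ↦ ?_⟩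
  have hclose : ∀ p ∈ strip T (U ∩ V),
      |graphPath (fun s ↦ a i s + b i s) p - (a₀ t₀ + graphPath (b i) p)| ≤ e / 3 := fun p hp ↦ by
    rw [(ha i).graphPath_add (hb i) hp.1, add_sub_add_right_eq_sub]
    exact hai p (strip_mono inter_subset_left hp)
  convert ((hbi.mono_set (strip_mono inter_subset_right)).const_add (a₀ t₀)).of_abs_sub_le hclose
    using 1
  ring

theorem M1_addition_with_jump_cancellation_general (hT : 0 < T)
    (ha : ∀ i, Cadlag T (a i)) (hb : ∀ i, Cadlag T (b i)) (ha₀ : Cadlag T a₀) (hb₀ : Cadlag T b₀)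
    (halim : Tendsto (fun i ↦ dM1 T (a i) a₀) l (𝓝 0))
    (hblim : Tendsto (fun i ↦ dM1 T (b i) b₀) l (𝓝 0))
    (hloc : ∀ t ∈ Icc 0 T, jumpAt a₀ t ≠ 0 → jumpAt b₀ t ≠ 0 → ∃ δ > 0,
      TendstoUniformlyOn (fun i s ↦ a i s + b i s) (fun s ↦ a₀ s + b₀ s) l
        (Icc 0 T ∩ Icc (t - δ) (t + δ))) :
    Tendsto (fun i ↦ dM1 T (fun s ↦ a i s + b i s) fun s ↦ a₀ s + b₀ s) l (𝓝 0) := by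
  set J : Set ℝ := {t ∈ Icc 0 T | leftVal a₀ t ≠ a₀ t} ∪ {t ∈ Icc 0 T | leftVal b₀ t ≠ b₀ t}
  have hJ : J.Countable := ha₀.countable_leftVal_ne.union hb₀.countable_leftVal_ne
  have h0 : (0 : ℝ) ∉ J := by simp [J, leftVal_zero]
  refine tendsto_dM1_of_tendsto_of_nearlyMonotoneOn (D := insert T Jᶜ) hT
    (fun i ↦ (ha i).add (hb i)) (ha₀.add hb₀) ((hJ.dense_compl ℝ).mono (subset_insert _ _))
    (mem_insert_of_mem _ h0) (mem_insert _ _) (fun t ht htD ↦ ?_) fun e he t₀ ht₀ ↦ ?_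
  · have hcont : (t = T ∨ leftVal a₀ t = a₀ t) ∧ (t = T ∨ leftVal b₀ t = b₀ t) := by
      grind
    exact (tendsto_apply_of_tendsto_dM1 hT.le ha ha₀ halim ht hcont.1).add
      (tendsto_apply_of_tendsto_dM1 hT.le hb hb₀ hblim ht hcont.2)
  · by_cases hja : jumpAt a₀ t₀ = 0
    · exact exists_nhds_eventually_nearlyMonotoneOn_add_of_leftVal_eq hT.le ha hb ha₀ hb₀ halim
        hblim ht₀ (sub_eq_zero.1 hja).symm he
    by_cases hjb : jumpAt b₀ t₀ = 0
    · simpa only [add_comm] using exists_nhds_eventually_nearlyMonotoneOn_add_of_leftVal_eq hT.le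
        hb ha hb₀ ha₀ hblim halim ht₀ (sub_eq_zero.1 hjb).symm he
    obtain ⟨δ, hδ, hunif⟩ := hloc t₀ ht₀ hja hjb
    exact exists_nhds_eventually_nearlyMonotoneOn_of_tendstoUniformlyOn
      (fun i ↦ (ha i).add (hb i)) (ha₀.add hb₀) (Icc_mem_nhds (by linarith) (by linarith)) hunif
      ht₀ he

end Addition

/-- allowed cancellation of jumps for M1. If `αₙ → α₀` uniformly on `[0,T]`,
`βₙ → β₀` in the Skorokhod M1 topology, and near every discontinuity point of `α₀` the
convergence `βₙ → β₀` is uniform, then `αₙ + βₙ → α₀ + β₀` in M1. -/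
theorem M1_addition_with_jump_cancellation
    (T : ℝ) (hT : 0 < T)
    (a b : ℕ → ℝ → ℝ) (a₀ b₀ : ℝ → ℝ)
    (ha : ∀ n, Cadlag T (a n)) (hb : ∀ n, Cadlag T (b n))
    (ha₀ : Cadlag T a₀) (hb₀ : Cadlag T b₀)
    (haconv : TendstoUniformlyOn (fun n => a n) a₀ Filter.atTop (Set.Icc 0 T))
    (hbconv : Filter.Tendsto (fun n => dM1 T (b n) b₀) Filter.atTop (nhds 0))
    (hloc : ∀ t ∈ Set.Icc (0:ℝ) T, jumpAt a₀ t ≠ 0 → ∃ δ > (0:ℝ),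
      TendstoUniformlyOn (fun n => b n) b₀ Filter.atTop
        (Set.Icc 0 T ∩ Set.Icc (t - δ) (t + δ))) :
    Filter.Tendsto (fun n => dM1 T (fun s => a n s + b n s) (fun s => a₀ s + b₀ s))
      Filter.atTop (nhds 0) := by
  refine M1_addition_with_jump_cancellation_general hT ha hb ha₀ hb₀
    (tendsto_dM1_of_tendstoUniformlyOn hT ha ha₀ haconv) hbconv fun t ht hjump _ ↦ ?_
  obtain ⟨δ, hδ, hunif⟩ := hloc t ht hjump
  exact ⟨δ, hδ, (haconv.mono inter_subset_left).add hunif⟩
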